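/- arXiv:1710.10051 — 2 statements merged into one kernel-verified Lean document; each statement's English description precedes it below -/
import Mathlib

section
/- Fix δ>0. For every closed regular curve γ:[0,1]→ℝ² of class H², the penalized energy satisfies F_δ(γ) = E(γ) + δ L(γ) ≥ 4π√δ, and the circle of radius δ^{-1/2} attains this value; hence the infimum of F_δ over closed regular H² curves equals 4π√δ. -/
/-!
The pointwise inequality `2√δ |k| ≤ k² + δ`, integrated against arclength, gives
`2√δ ∫ |k| ds ≤ F_δ(γ)`, with equality when `|k| = √δ`. It remains to bound the total absolute
curvature of a closed curve below by `2π` (Fenchel). Write the velocity as `|γ'| exp(iθ)` with `θ`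
continuous, so that `∫ |k| ds` is the total variation of `θ`. The two end tangents agree, so
`θ(1) - θ(0)` is a multiple of `2π`; if it is nonzero, we are done. Otherwise `θ` returns to its
initial value, and its total variation is at least twice its oscillation. The oscillation is at
least `π`: otherwise all tangents lie in an open half-plane, and the curve advances strictly
in one direction and cannot close up.
-/

/-- A regular planar curve of class `H²`, recorded through its components `x, y`,
their first derivatives `xd, yd` and second derivatives `xdd, ydd` on `[0,1]`,
together with the regularity (non-vanishing speed) and the integrability of the
(squared and absolute) curvature with respect to arclength. -/
structure RegularCurve where
  x : ℝ → ℝ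
  y : ℝ → ℝ
  xd : ℝ → ℝ
  yd : ℝ → ℝ
  xdd : ℝ → ℝ
  ydd : ℝ → ℝ
  hx : ∀ t ∈ Set.Icc (0:ℝ) 1, HasDerivWithinAt x (xd t) (Set.Icc 0 1) t
  hy : ∀ t ∈ Set.Icc (0:ℝ) 1, HasDerivWithinAt y (yd t) (Set.Icc 0 1) t
  hxd : ∀ t ∈ Set.Icc (0:ℝ) 1, HasDerivWithinAt xd (xdd t) (Set.Icc 0 1) t
  hyd : ∀ t ∈ Set.Icc (0:ℝ) 1, HasDerivWithinAt yd (ydd t) (Set.Icc 0 1) t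
  regular : ∀ t ∈ Set.Icc (0:ℝ) 1, xd t ^ 2 + yd t ^ 2 ≠ 0
  intE : IntervalIntegrable
    (fun t => (xd t * ydd t - xdd t * yd t) ^ 2 /
      ((xd t ^ 2 + yd t ^ 2) ^ 2 * Real.sqrt (xd t ^ 2 + yd t ^ 2)))
    MeasureTheory.volume 0 1
  intK : IntervalIntegrable
    (fun t => |xd t * ydd t - xdd t * yd t| / (xd t ^ 2 + yd t ^ 2))
    MeasureTheory.volume 0 1

namespace RegularCurve

/-- The elastic energy `∫ k² ds`, where `k = (x'y'' - x''y')/|γ'|³` is the scalar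
curvature and `ds = |γ'| dx`. -/
noncomputable def elasticEnergy (γ : RegularCurve) : ℝ :=
  ∫ t in (0:ℝ)..1, (γ.xd t * γ.ydd t - γ.xdd t * γ.yd t) ^ 2 /
    ((γ.xd t ^ 2 + γ.yd t ^ 2) ^ 2 * Real.sqrt (γ.xd t ^ 2 + γ.yd t ^ 2))

/-- The length `∫ 1 ds`. -/
noncomputable def length (γ : RegularCurve) : ℝ :=
  ∫ t in (0:ℝ)..1, Real.sqrt (γ.xd t ^ 2 + γ.yd t ^ 2)

/-- The total absolute curvature `∫ |k| ds`. -/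
noncomputable def totalAbsCurvature (γ : RegularCurve) : ℝ :=
  ∫ t in (0:ℝ)..1, |γ.xd t * γ.ydd t - γ.xdd t * γ.yd t| / (γ.xd t ^ 2 + γ.yd t ^ 2)

/-- A curve is closed if `γ(0) = γ(1)` and the unit tangents agree, `τ(0) = τ(1)`. -/
def IsClosedCurve (γ : RegularCurve) : Prop :=
  γ.x 0 = γ.x 1 ∧ γ.y 0 = γ.y 1 ∧
  γ.xd 0 / Real.sqrt (γ.xd 0 ^ 2 + γ.yd 0 ^ 2)
    = γ.xd 1 / Real.sqrt (γ.xd 1 ^ 2 + γ.yd 1 ^ 2) ∧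
  γ.yd 0 / Real.sqrt (γ.xd 0 ^ 2 + γ.yd 0 ^ 2)
    = γ.yd 1 / Real.sqrt (γ.xd 1 ^ 2 + γ.yd 1 ^ 2)

end RegularCurve

open Set MeasureTheory
open scoped Real

/-- `θ` is a continuous choice of argument on `s` for the complex-valued function `z`; for the
velocity `z` of a plane curve, `θ` is the tangent angle. Where `z` vanishes, the polar equation
does not restrict `θ`. -/
structure IsContinuousArgOn {X : Type*} [TopologicalSpace X] (θ : X → ℝ) (z : X → ℂ)
    (s : Set X) : Prop where
  continuousOn : ContinuousOn θ s
  norm_mul_exp : ∀ t ∈ s, ‖z t‖ * Complex.exp (θ t * Complex.I) = z t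

theorem exists_isContinuousArgOn_Icc {a b : ℝ} (hab : a ≤ b) {z : ℝ → ℂ}
    (hz : ContinuousOn z (Icc a b)) (hne : ∀ t ∈ Icc a b, z t ≠ 0) :
    ∃ θ : ℝ → ℝ, IsContinuousArgOn θ z (Icc a b) := by
  let f : ℝ → ℂ := IccExtend hab ((Icc a b).domRestrict z)
  have hf : Continuous f := (continuousOn_iff_continuous_domRestrict.mp hz).Icc_extend'
  have hf_eq : EqOn f z (Icc a b) := fun t ht => IccExtend_of_mem hab _ ht
  have hf_ne : (0 : ℂ) ∉ f '' univ := by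
    rintro ⟨t, -, ht⟩
    exact hne _ (projIcc a b hab t).2 ht
  have : ContractibleSpace (univ : Set ℝ) := (Homeomorph.Set.univ ℝ).contractibleSpace
  obtain ⟨w, hw, hexp⟩ := Complex.exists_continuousOn_eqOn_exp_comp
    (SimplyConnectedSpace.ofContractible _) isOpen_univ hf.continuousOn hf_ne
  refine ⟨fun t => (w t).im,
    Complex.continuous_im.comp_continuousOn (hw.mono (subset_univ _)), fun t ht => ?_⟩
  have hwt : Complex.exp (w t) = z t := (hexp (mem_univ t)).trans (hf_eq ht)
  rw [← hwt, Complex.norm_exp, Complex.ofReal_exp, ← Complex.exp_add, Complex.re_add_im]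

namespace IsContinuousArgOn

section

variable {X : Type*} [TopologicalSpace X] {θ : X → ℝ} {z : X → ℂ} {s : Set X} {t u : X}

theorem exp_mul_I_eq (hθ : IsContinuousArgOn θ z s) (ht : t ∈ s) (hne : z t ≠ 0) :
    Complex.exp (θ t * Complex.I) = z t / ‖z t‖ :=
  eq_div_of_mul_eq (by simpa using hne) (by rw [mul_comm, hθ.norm_mul_exp t ht])

theorem arg_div_eq_sub (hθ : IsContinuousArgOn θ z s) (ht : t ∈ s) (hu : u ∈ s)
    (hzt : z t ≠ 0) (hzu : z u ≠ 0) (hsub : θ u - θ t ∈ Ioc (-π) π) :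
    Complex.arg (z u / z t) = θ u - θ t := by
  have hquot : z u / z t =
      ↑(‖z u‖ / ‖z t‖) * Complex.exp (↑(θ u - θ t) * Complex.I) := by
    rw [Complex.ofReal_sub, sub_mul, Complex.exp_sub, Complex.ofReal_div, div_mul_div_comm,
      hθ.norm_mul_exp u hu, hθ.norm_mul_exp t ht]
  rw [hquot, Complex.exp_mul_I]
  exact Complex.arg_mul_cos_add_sin_mul_I
    (div_pos (norm_pos_iff.mpr hzu) (norm_pos_iff.mpr hzt)) hsub

end

theorem hasDerivWithinAt {θ : ℝ → ℝ} {z : ℝ → ℂ} {s : Set ℝ} {t : ℝ} {z' : ℂ}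
    (hθ : IsContinuousArgOn θ z s) (hz : HasDerivWithinAt z z' s t) (ht : t ∈ s)
    (hne : z t ≠ 0) : HasDerivWithinAt θ (z' / z t).im s t := by
  have hlog : HasDerivWithinAt (fun u => Complex.log (z u / z t)) (z' / z t) s t := by
    simpa [div_self hne] using (hz.div_const (z t)).clog_real (by simp [div_self hne])
  have him : HasDerivWithinAt (fun u => θ t + (Complex.log (z u / z t)).im) (z' / z t).im s t :=
    (Complex.imCLM.hasFDerivAt.comp_hasDerivWithinAt t hlog).const_add (θ t)
  have hsub : ∀ᶠ u in nhdsWithin t s, θ u - θ t ∈ Ioo (-π) π :=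
    ((hθ.continuousOn t ht).sub_const (θ t)).eventually_mem
      (Ioo_mem_nhds (by simp [Real.pi_pos]) (by simp [Real.pi_pos]))
  refine him.congr_of_eventuallyEq ?_ (by simp [div_self hne])
  filter_upwards [hsub, hz.continuousWithinAt.eventually_ne hne, self_mem_nhdsWithin]
    with u hu hzu hus
  rw [Complex.log_im, hθ.arg_div_eq_sub ht hus hne hzu (Ioo_subset_Ioc_self hu)]
  ring

variable {a b : ℝ} {θ : ℝ → ℝ} {c c' : ℝ → ℂ}

theorem strictMonoOn_re_mul_exp (hθ : IsContinuousArgOn θ c' (Icc a b))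
    (hc : ContinuousOn c (Icc a b)) (hc' : ∀ t ∈ Ioo a b, HasDerivAt c (c' t) t)
    (hne : ∀ t ∈ Ioo a b, c' t ≠ 0) {φ : ℝ}
    (hφ : ∀ t ∈ Ioo a b, θ t - φ ∈ Ioo (-(π / 2)) (π / 2)) :
    StrictMonoOn (fun t => (c t * Complex.exp (-φ * Complex.I)).re) (Icc a b) := by
  have hderiv : ∀ t ∈ Ioo a b, HasDerivAt (fun t => (c t * Complex.exp (-φ * Complex.I)).re)
      (‖c' t‖ * Real.cos (θ t - φ)) t := by
    intro t ht
    have hre : (c' t * Complex.exp (-φ * Complex.I)).re = ‖c' t‖ * Real.cos (θ t - φ) := by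
      rw [← hθ.norm_mul_exp t (Ioo_subset_Icc_self ht), mul_assoc, ← Complex.exp_add, ← add_mul,
        ← sub_eq_add_neg, ← Complex.ofReal_sub, Complex.re_ofReal_mul, Complex.exp_ofReal_mul_I_re]
      simp
    rw [← hre]
    exact Complex.reCLM.hasFDerivAt.comp_hasDerivAt t ((hc' t ht).mul_const _)
  refine strictMonoOn_of_deriv_pos (convex_Icc a b)
    (Complex.continuous_re.comp_continuousOn (hc.mul_const _)) fun t ht => ?_
  rw [interior_Icc] at ht
  rw [(hderiv t ht).deriv]
  exact mul_pos (norm_pos_iff.mpr (hne t ht)) (Real.cos_pos_of_mem_Ioo (hφ t ht))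

theorem exists_pi_le_sub (hθ : IsContinuousArgOn θ c' (Icc a b)) (hab : a < b)
    (hc : ContinuousOn c (Icc a b)) (hc' : ∀ t ∈ Ioo a b, HasDerivAt c (c' t) t)
    (hne : ∀ t ∈ Ioo a b, c' t ≠ 0) (hclosed : c a = c b) :
    ∃ p ∈ Icc a b, ∃ q ∈ Icc a b, π ≤ θ q - θ p := by
  have hnonempty : (Icc a b).Nonempty := nonempty_Icc.mpr hab.le
  obtain ⟨p, hp, hmin⟩ := isCompact_Icc.exists_isMinOn hnonempty hθ.continuousOn
  obtain ⟨q, hq, hmax⟩ := isCompact_Icc.exists_isMaxOn hnonempty hθ.continuousOn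
  refine ⟨p, hp, q, hq, ?_⟩
  by_contra! hosc
  have hnear : ∀ t ∈ Ioo a b, θ t - (θ p + θ q) / 2 ∈ Ioo (-(π / 2)) (π / 2) := by
    intro t ht
    have hpt : θ p ≤ θ t := hmin (Ioo_subset_Icc_self ht)
    have htq : θ t ≤ θ q := hmax (Ioo_subset_Icc_self ht)
    constructor <;> linarith
  have hlt := hθ.strictMonoOn_re_mul_exp hc hc' hne hnear
    (left_mem_Icc.mpr hab.le) (right_mem_Icc.mpr hab.le) hab
  simp only [hclosed, lt_irrefl] at hlt

end IsContinuousArgOn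

theorem eq_or_two_pi_le_abs_sub_of_exp_mul_I_eq {θ ψ : ℝ}
    (h : Complex.exp (θ * Complex.I) = Complex.exp (ψ * Complex.I)) :
    θ = ψ ∨ 2 * π ≤ |θ - ψ| := by
  obtain ⟨n, hn⟩ := Complex.exp_eq_exp_iff_exists_int.mp h
  have hsub : θ - ψ = n * (2 * π) := by
    rw [sub_eq_iff_eq_add']
    simpa using congrArg Complex.im hn
  rcases eq_or_ne n 0 with rfl | hn0
  · left
    simpa [sub_eq_zero] using hsub
  · right
    have hone : (1 : ℝ) ≤ |(n : ℝ)| := mod_cast Int.one_le_abs hn0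
    rw [hsub, abs_mul, abs_of_pos Real.two_pi_pos]
    exact le_mul_of_one_le_left Real.two_pi_pos.le hone

theorem two_mul_norm_sub_le_integral_of_norm_deriv_le {E : Type*} [NormedAddCommGroup E]
    [NormedSpace ℝ E] {a b : ℝ} {f : ℝ → E} {B : ℝ → ℝ} (hf : ContinuousOn f (Icc a b))
    (hf' : DifferentiableOn ℝ f (Ioo a b)) (hB : ∀ t ∈ Ioo a b, ‖deriv f t‖ ≤ B t)
    (hBint : IntervalIntegrable B volume a b) (hclosed : f a = f b) {p q : ℝ}
    (hp : p ∈ Icc a b) (hq : q ∈ Icc a b) :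
    2 * ‖f q - f p‖ ≤ ∫ t in a..b, B t := by
  wlog hpq : p ≤ q generalizing p q
  · rw [norm_sub_rev]
    exact this hq hp (le_of_not_ge hpq)
  have hint : ∀ {u v}, a ≤ u → u ≤ v → v ≤ b → IntervalIntegrable B volume u v :=
    fun hau huv hvb => hBint.mono_set <| by
      rw [uIcc_of_le huv, uIcc_of_le (hau.trans (huv.trans hvb))]
      exact Icc_subset_Icc hau hvb
  have hincr : ∀ {u v}, a ≤ u → u ≤ v → v ≤ b → ‖f v - f u‖ ≤ ∫ t in u..v, B t :=
    fun hau huv hvb => norm_sub_le_integral_of_norm_deriv_le_of_le huv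
      (hf.mono (Icc_subset_Icc hau hvb)) (hf'.mono (Ioo_subset_Ioo hau hvb))
      (.of_forall fun t ht => hB t (Ioo_subset_Ioo hau hvb ht)) (hint hau huv hvb)
  have htriangle : ‖f q - f p‖ ≤ ‖f p - f a‖ + ‖f b - f q‖ := by
    rw [← hclosed, norm_sub_rev (f q)]
    exact norm_sub_le_norm_sub_add_norm_sub (f p) (f a) (f q)
  calc 2 * ‖f q - f p‖
      ≤ ‖f p - f a‖ + ‖f q - f p‖ + ‖f b - f q‖ := by linarith
    _ ≤ (∫ t in a..p, B t) + (∫ t in p..q, B t) + ∫ t in q..b, B t :=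
        add_le_add (add_le_add (hincr le_rfl hp.1 hp.2) (hincr hp.1 hpq hq.2))
          (hincr hq.1 hq.2 le_rfl)
    _ = ∫ t in a..b, B t := by
        rw [intervalIntegral.integral_add_adjacent_intervals (hint le_rfl hp.1 hp.2)
            (hint hp.1 hpq hq.2),
          intervalIntegral.integral_add_adjacent_intervals (hint le_rfl hq.1 hq.2)
            (hint hq.1 hq.2 le_rfl)]

/-- Fenchel's inequality for a plane curve `c` in an arbitrary regular parametrization:
`(c'' t / c' t).im` is the curvature times the speed. -/
theorem two_pi_le_integral_abs_im_div {a b : ℝ} (hab : a < b) {c c' c'' : ℝ → ℂ}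
    (hc : ∀ t ∈ Icc a b, HasDerivWithinAt c (c' t) (Icc a b) t)
    (hc' : ∀ t ∈ Icc a b, HasDerivWithinAt c' (c'' t) (Icc a b) t)
    (hne : ∀ t ∈ Icc a b, c' t ≠ 0)
    (hint : IntervalIntegrable (fun t => |(c'' t / c' t).im|) volume a b)
    (hclosed : c a = c b) (htangent : c' a / ‖c' a‖ = c' b / ‖c' b‖) :
    2 * π ≤ ∫ t in a..b, |(c'' t / c' t).im| := by
  have ha : a ∈ Icc a b := left_mem_Icc.mpr hab.le
  have hb : b ∈ Icc a b := right_mem_Icc.mpr hab.le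
  have hIoo : Ioo a b ⊆ Icc a b := Ioo_subset_Icc_self
  obtain ⟨θ, hθ⟩ := exists_isContinuousArgOn_Icc hab.le
    (fun t ht => (hc' t ht).continuousWithinAt) hne
  have hθ' : ∀ t ∈ Ioo a b, HasDerivAt θ (c'' t / c' t).im t := fun t ht =>
    (hθ.hasDerivWithinAt (hc' t (hIoo ht)) (hIoo ht) (hne t (hIoo ht))).hasDerivAt
      (Icc_mem_nhds ht.1 ht.2)
  have hdiff : DifferentiableOn ℝ θ (Ioo a b) := fun t ht =>
    (hθ' t ht).differentiableAt.differentiableWithinAt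
  have hderiv_le : ∀ t ∈ Ioo a b, ‖deriv θ t‖ ≤ |(c'' t / c' t).im| := fun t ht => by
    rw [(hθ' t ht).deriv, Real.norm_eq_abs]
  have hends : Complex.exp (θ b * Complex.I) = Complex.exp (θ a * Complex.I) := by
    rw [hθ.exp_mul_I_eq ha (hne a ha), hθ.exp_mul_I_eq hb (hne b hb), htangent]
  rcases eq_or_two_pi_le_abs_sub_of_exp_mul_I_eq hends with hreturn | hturn
  · obtain ⟨p, hp, q, hq, hpi⟩ := hθ.exists_pi_le_sub hab
      (fun t ht => (hc t ht).continuousWithinAt)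
      (fun t ht => (hc t (hIoo ht)).hasDerivAt (Icc_mem_nhds ht.1 ht.2))
      (fun t ht => hne t (hIoo ht)) hclosed
    calc 2 * π ≤ 2 * ‖θ q - θ p‖ := by gcongr; exact hpi.trans (le_abs_self _)
      _ ≤ _ := two_mul_norm_sub_le_integral_of_norm_deriv_le hθ.continuousOn hdiff hderiv_le hint
        hreturn.symm hp hq
  · exact hturn.trans (norm_sub_le_integral_of_norm_deriv_le_of_le hab.le hθ.continuousOn hdiff
      (.of_forall hderiv_le) hint)

theorem two_mul_sqrt_mul_abs_le {δ v : ℝ} (hδ : 0 ≤ δ) (hv : 0 < v) (ω : ℝ) :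
    2 * √δ * |ω| ≤ ω ^ 2 / v + δ * v := by
  have hsquare : ω ^ 2 / v + δ * v - 2 * √δ * |ω| = (|ω| - √δ * v) ^ 2 / v := by
    rw [sub_sq, mul_pow, Real.sq_sqrt hδ, sq_abs]
    field_simp
    ring
  exact sub_nonneg.mp (hsquare ▸ by positivity)

theorem neg_mul_sin_sq_add_mul_cos_sq (ρ θ : ℝ) :
    (-ρ * Real.sin θ) ^ 2 + (ρ * Real.cos θ) ^ 2 = ρ ^ 2 := by
  linear_combination ρ ^ 2 * Real.sin_sq_add_cos_sq θ

theorem hasDerivAt_mul_cos_mul (ρ ω t : ℝ) :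
    HasDerivAt (fun t => ρ * Real.cos (ω * t)) (-(ω * ρ) * Real.sin (ω * t)) t := by
  simpa [mul_comm, mul_left_comm, mul_assoc] using
    ((hasDerivAt_id t).const_mul ω).cos.const_mul ρ

theorem hasDerivAt_mul_sin_mul (ρ ω t : ℝ) :
    HasDerivAt (fun t => ρ * Real.sin (ω * t)) (ω * ρ * Real.cos (ω * t)) t := by
  simpa [mul_comm, mul_left_comm, mul_assoc] using
    ((hasDerivAt_id t).const_mul ω).sin.const_mul ρ

namespace RegularCurve

/-- The position `x + iy` in the complex plane. -/
noncomputable def position (γ : RegularCurve) (t : ℝ) : ℂ := γ.x t + γ.y t * Complex.I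

/-- The velocity `γ'` as a complex number. -/
noncomputable def velocity (γ : RegularCurve) (t : ℝ) : ℂ := γ.xd t + γ.yd t * Complex.I

/-- The acceleration `γ''` as a complex number. -/
noncomputable def acceleration (γ : RegularCurve) (t : ℝ) : ℂ := γ.xdd t + γ.ydd t * Complex.I

/-- The speed `|γ'|`, the density of arclength `ds = |γ'| dx`. -/
noncomputable def speed (γ : RegularCurve) (t : ℝ) : ℝ := √(γ.xd t ^ 2 + γ.yd t ^ 2)

/-- The rate of rotation `k |γ'|` of the unit tangent, that is, the density of `k ds`. -/
noncomputable def turningRate (γ : RegularCurve) (t : ℝ) : ℝ :=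
  (γ.xd t * γ.ydd t - γ.xdd t * γ.yd t) / (γ.xd t ^ 2 + γ.yd t ^ 2)

variable (γ : RegularCurve)

theorem norm_velocity (t : ℝ) : ‖γ.velocity t‖ = γ.speed t :=
  Complex.norm_add_mul_I _ _

theorem im_acceleration_div_velocity (t : ℝ) :
    (γ.acceleration t / γ.velocity t).im = γ.turningRate t := by
  simp only [acceleration, velocity, turningRate, Complex.div_im, Complex.normSq_add_mul_I,
    Complex.add_re, Complex.add_im, Complex.mul_re, Complex.mul_im, Complex.ofReal_re,
    Complex.ofReal_im, Complex.I_re, Complex.I_im]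
  ring

theorem sq_turningRate_div_speed (t : ℝ) : γ.turningRate t ^ 2 / γ.speed t =
    (γ.xd t * γ.ydd t - γ.xdd t * γ.yd t) ^ 2 /
      ((γ.xd t ^ 2 + γ.yd t ^ 2) ^ 2 * √(γ.xd t ^ 2 + γ.yd t ^ 2)) := by
  rw [turningRate, speed, div_pow, div_div]

theorem abs_turningRate (t : ℝ) : |γ.turningRate t| =
    |γ.xd t * γ.ydd t - γ.xdd t * γ.yd t| / (γ.xd t ^ 2 + γ.yd t ^ 2) := by
  rw [turningRate, abs_div, abs_of_nonneg (by positivity : 0 ≤ γ.xd t ^ 2 + γ.yd t ^ 2)]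

theorem elasticEnergy_eq_integral :
    γ.elasticEnergy = ∫ t in (0 : ℝ)..1, γ.turningRate t ^ 2 / γ.speed t := by
  simp only [sq_turningRate_div_speed, elasticEnergy]

theorem length_eq_integral : γ.length = ∫ t in (0 : ℝ)..1, γ.speed t := rfl

theorem totalAbsCurvature_eq_integral :
    γ.totalAbsCurvature = ∫ t in (0 : ℝ)..1, |γ.turningRate t| := by
  simp only [abs_turningRate, totalAbsCurvature]

theorem intervalIntegrable_sq_turningRate_div_speed :
    IntervalIntegrable (fun t => γ.turningRate t ^ 2 / γ.speed t) volume 0 1 := by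
  simpa only [sq_turningRate_div_speed] using γ.intE

theorem intervalIntegrable_abs_turningRate :
    IntervalIntegrable (fun t => |γ.turningRate t|) volume 0 1 := by
  simpa only [abs_turningRate] using γ.intK

theorem intervalIntegrable_speed : IntervalIntegrable γ.speed volume 0 1 := by
  have hxd : ContinuousOn γ.xd (Icc 0 1) := fun t ht => (γ.hxd t ht).continuousWithinAt
  have hyd : ContinuousOn γ.yd (Icc 0 1) := fun t ht => (γ.hyd t ht).continuousWithinAt
  exact ((hxd.pow 2).add (hyd.pow 2)).sqrt.intervalIntegrable_of_Icc zero_le_one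

section

variable {γ} {t : ℝ}

theorem speed_pos (ht : t ∈ Icc (0 : ℝ) 1) : 0 < γ.speed t :=
  Real.sqrt_pos.mpr ((by positivity : 0 ≤ γ.xd t ^ 2 + γ.yd t ^ 2).lt_of_ne'
    (γ.regular t ht))

theorem velocity_ne_zero (ht : t ∈ Icc (0 : ℝ) 1) : γ.velocity t ≠ 0 :=
  norm_pos_iff.mp ((γ.norm_velocity t).symm ▸ speed_pos ht)

theorem hasDerivWithinAt_position (ht : t ∈ Icc (0 : ℝ) 1) :
    HasDerivWithinAt γ.position (γ.velocity t) (Icc 0 1) t :=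
  (γ.hx t ht).ofReal_comp.add ((γ.hy t ht).ofReal_comp.mul_const _)

theorem hasDerivWithinAt_velocity (ht : t ∈ Icc (0 : ℝ) 1) :
    HasDerivWithinAt γ.velocity (γ.acceleration t) (Icc 0 1) t :=
  (γ.hxd t ht).ofReal_comp.add ((γ.hyd t ht).ofReal_comp.mul_const _)

theorem IsClosedCurve.position_eq (hγ : γ.IsClosedCurve) : γ.position 0 = γ.position 1 := by
  rw [position, position, hγ.1, hγ.2.1]

theorem IsClosedCurve.unitTangent_eq (hγ : γ.IsClosedCurve) :
    γ.velocity 0 / ‖γ.velocity 0‖ = γ.velocity 1 / ‖γ.velocity 1‖ := by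
  have hunit : ∀ t, γ.velocity t / ‖γ.velocity t‖ =
      ↑(γ.xd t / γ.speed t) + ↑(γ.yd t / γ.speed t) * Complex.I := fun t => by
    rw [norm_velocity, velocity, Complex.ofReal_div, Complex.ofReal_div]
    ring
  rw [hunit, hunit]
  exact congrArg₂ (fun u v : ℝ => (u + v * Complex.I : ℂ)) hγ.2.2.1 hγ.2.2.2

theorem IsClosedCurve.two_pi_le_totalAbsCurvature (hγ : γ.IsClosedCurve) :
    2 * π ≤ γ.totalAbsCurvature := by
  have hfenchel := two_pi_le_integral_abs_im_div zero_lt_one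
    (fun _ => γ.hasDerivWithinAt_position) (fun _ => γ.hasDerivWithinAt_velocity)
    (fun _ => γ.velocity_ne_zero)
    (by simpa only [im_acceleration_div_velocity] using γ.intervalIntegrable_abs_turningRate)
    hγ.position_eq hγ.unitTangent_eq
  simpa only [im_acceleration_div_velocity, totalAbsCurvature_eq_integral] using hfenchel

end

theorem two_mul_sqrt_mul_totalAbsCurvature_le {δ : ℝ} (hδ : 0 ≤ δ) :
    2 * √δ * γ.totalAbsCurvature ≤ γ.elasticEnergy + δ * γ.length := by
  have hE := γ.intervalIntegrable_sq_turningRate_div_speed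
  have hL := γ.intervalIntegrable_speed.const_mul δ
  calc 2 * √δ * γ.totalAbsCurvature
      = ∫ t in (0 : ℝ)..1, 2 * √δ * |γ.turningRate t| := by
        rw [totalAbsCurvature_eq_integral, intervalIntegral.integral_const_mul]
    _ ≤ ∫ t in (0 : ℝ)..1, (γ.turningRate t ^ 2 / γ.speed t + δ * γ.speed t) :=
        intervalIntegral.integral_mono_on zero_le_one
          (γ.intervalIntegrable_abs_turningRate.const_mul _) (hE.add hL)
          fun t ht => two_mul_sqrt_mul_abs_le hδ (speed_pos ht) (γ.turningRate t)
    _ = γ.elasticEnergy + δ * γ.length := by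
        rw [intervalIntegral.integral_add hE hL, intervalIntegral.integral_const_mul,
          elasticEnergy_eq_integral, length_eq_integral]

theorem IsClosedCurve.four_mul_pi_mul_sqrt_le {γ : RegularCurve} (hγ : γ.IsClosedCurve) {δ : ℝ}
    (hδ : 0 ≤ δ) : 4 * π * √δ ≤ γ.elasticEnergy + δ * γ.length :=
  calc 4 * π * √δ = 2 * √δ * (2 * π) := by ring
    _ ≤ 2 * √δ * γ.totalAbsCurvature := by gcongr; exact hγ.two_pi_le_totalAbsCurvature
    _ ≤ γ.elasticEnergy + δ * γ.length := γ.two_mul_sqrt_mul_totalAbsCurvature_le hδ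

section Circle

/-- The circle of radius `r` centred at the origin, traversed once counterclockwise at constant
speed `2πr`. -/
noncomputable def circle (r : ℝ) (hr : 0 < r) : RegularCurve :=
  { x := fun t => r * Real.cos (2 * π * t)
    y := fun t => r * Real.sin (2 * π * t)
    xd := fun t => -(2 * π * r) * Real.sin (2 * π * t)
    yd := fun t => 2 * π * r * Real.cos (2 * π * t)
    xdd := fun t => 2 * π * -(2 * π * r) * Real.cos (2 * π * t)
    ydd := fun t => -(2 * π * (2 * π * r)) * Real.sin (2 * π * t)
    hx := fun t _ => (hasDerivAt_mul_cos_mul _ _ t).hasDerivWithinAt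
    hy := fun t _ => (hasDerivAt_mul_sin_mul _ _ t).hasDerivWithinAt
    hxd := fun t _ => (hasDerivAt_mul_sin_mul _ _ t).hasDerivWithinAt
    hyd := fun t _ => (hasDerivAt_mul_cos_mul _ _ t).hasDerivWithinAt
    regular := fun t _ => by
      rw [neg_mul_sin_sq_add_mul_cos_sq]
      positivity
    intE := by
      simp only [neg_mul_sin_sq_add_mul_cos_sq]
      exact Continuous.intervalIntegrable (by fun_prop) _ _
    intK := by
      simp only [neg_mul_sin_sq_add_mul_cos_sq]
      exact Continuous.intervalIntegrable (by fun_prop) _ _ }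

variable {r : ℝ} (hr : 0 < r)

theorem isClosedCurve_circle : (circle r hr).IsClosedCurve := by
  simp [IsClosedCurve, circle]

theorem speed_circle (t : ℝ) : (circle r hr).speed t = 2 * π * r := by
  rw [speed, circle, neg_mul_sin_sq_add_mul_cos_sq, Real.sqrt_sq (by positivity)]

theorem turningRate_circle (t : ℝ) : (circle r hr).turningRate t = 2 * π := by
  rw [turningRate, circle, neg_mul_sin_sq_add_mul_cos_sq, div_eq_iff (by positivity)]
  linear_combination (2 * π) * (2 * π * r) ^ 2 * Real.sin_sq_add_cos_sq (2 * π * t)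

theorem length_circle : (circle r hr).length = 2 * π * r := by
  simp [length_eq_integral, speed_circle]

theorem elasticEnergy_circle : (circle r hr).elasticEnergy = 2 * π / r := by
  simp only [elasticEnergy_eq_integral, turningRate_circle, speed_circle,
    intervalIntegral.integral_const, sub_zero, one_smul]
  field_simp

theorem elasticEnergy_add_mul_length_circle_inv_sqrt {δ : ℝ} (hr : 0 < (√δ)⁻¹) :
    (circle (√δ)⁻¹ hr).elasticEnergy + δ * (circle (√δ)⁻¹ hr).length = 4 * π * √δ := by
  have hsqrt : δ * (√δ)⁻¹ = √δ := Real.div_sqrt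
  rw [elasticEnergy_circle, length_circle, div_inv_eq_mul]
  linear_combination 2 * π * hsqrt

end Circle

end RegularCurve

/-- Fix `δ > 0`. Every closed regular `H^2` curve satisfies
`F_δ = E + δ L ≥ 4π√δ`, the circle of radius `δ^(-1/2)` attains this value,
and hence the infimum of `F_δ` over closed regular `H^2` curves equals `4π√δ`. -/
theorem penalized_energy_delta (δ : ℝ) (hδ : 0 < δ) :
    (∀ γ : RegularCurve, γ.IsClosedCurve →
      4 * Real.pi * Real.sqrt δ ≤ γ.elasticEnergy + δ * γ.length) ∧
    (∃ γ : RegularCurve, γ.IsClosedCurve ∧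
      (∀ t, γ.x t = (Real.sqrt δ)⁻¹ * Real.cos (2 * Real.pi * t)) ∧
      (∀ t, γ.y t = (Real.sqrt δ)⁻¹ * Real.sin (2 * Real.pi * t)) ∧
      γ.elasticEnergy + δ * γ.length = 4 * Real.pi * Real.sqrt δ) ∧
    IsGLB {v : ℝ | ∃ γ : RegularCurve, γ.IsClosedCurve ∧
        v = γ.elasticEnergy + δ * γ.length}
      (4 * Real.pi * Real.sqrt δ) := by
  have hbound (γ : RegularCurve) (hγ : γ.IsClosedCurve) :
      4 * π * √δ ≤ γ.elasticEnergy + δ * γ.length :=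
    hγ.four_mul_pi_mul_sqrt_le hδ.le
  have hr : 0 < (√δ)⁻¹ := inv_pos.mpr (Real.sqrt_pos.mpr hδ)
  have hclosed := RegularCurve.isClosedCurve_circle hr
  have hvalue := RegularCurve.elasticEnergy_add_mul_length_circle_inv_sqrt hr
  refine ⟨hbound, ⟨.circle _ hr, hclosed, fun _ => rfl, fun _ => rfl, hvalue⟩, ?_⟩
  refine IsLeast.isGLB ⟨⟨.circle _ hr, hclosed, hvalue.symm⟩, ?_⟩
  rintro _ ⟨γ, hγ, rfl⟩
  exact hbound γ hγ
end

section
/- Let λ>0 and let γ=(x,y):I→ℝ² be a smooth curve parametrized by arclength whose components satisfy the system x'' = λyy' and y'' = -λyx' on the interval I. Then the signed curvature k = x'y'' - x''y' of γ equals -λy on I, there exists μ∈ℝ such that x' = (λ/2)y² + μ on I, and k satisfies the elastica equation 2k'' + k³ - δk = 0 on I with δ = -2λμ. -/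
/-!
The system says that the acceleration `(x'', y'')` is `-λy` times the unit normal `(-y', x')`, so
the signed curvature is `-λy`. The equation for `x''` makes `x' - (λ/2)y²` a constant `μ`.
Eliminating `x'` from the equation for `y''` leaves `2y'' = -2λμy - λ²y³`, and multiplying by `-λ`
turns this into the elastica equation for `-λy`.
-/

open Set

/-- The signed curvature of a unit-speed plane curve with respect to the counterclockwise unit
normal, as a function of the components of its velocity `(x₁, y₁)` and acceleration `(x₂, y₂)`. -/
def signedCurvature {R : Type*} [CommRing R] (x₁ y₁ x₂ y₂ : R) : R :=
  x₁ * y₂ - x₂ * y₁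

theorem signedCurvature_eq_neg_of_unit_speed {R : Type*} [CommRing R] {c x₁ y₁ x₂ y₂ : R}
    (hunit : x₁ ^ 2 + y₁ ^ 2 = 1) (hx₂ : x₂ = c * y₁) (hy₂ : y₂ = -(c * x₁)) :
    signedCurvature x₁ y₁ x₂ y₂ = -c := by
  rw [signedCurvature, hx₂, hy₂]
  linear_combination -c * hunit

section Elastica

variable {𝕜 : Type*} [NontriviallyNormedField 𝕜] {I : Set 𝕜} {δ : 𝕜} {k k₁ k₂ : 𝕜 → 𝕜}

/-- On `I` the function `k` solves the elastica equation `2k'' + k³ - δk = 0`. The derivatives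
`k₁` and `k₂` are part of the data, so that no value of `deriv` at a point of
non-differentiability enters. -/
def SolvesElasticaOn (δ : 𝕜) (I : Set 𝕜) (k k₁ k₂ : 𝕜 → 𝕜) : Prop :=
  (∀ t ∈ I, HasDerivAt k (k₁ t) t) ∧
  (∀ t ∈ I, HasDerivAt k₁ (k₂ t) t) ∧
  ∀ t ∈ I, 2 * k₂ t + k t ^ 3 - δ * k t = 0

theorem SolvesElasticaOn.congr {l : 𝕜 → 𝕜} (hk : SolvesElasticaOn δ I k k₁ k₂) (hI : IsOpen I)
    (hlk : EqOn l k I) : SolvesElasticaOn δ I l k₁ k₂ := by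
  obtain ⟨hderiv, hderiv₁, heq⟩ := hk
  refine ⟨fun t ht ↦ ?_, hderiv₁, fun t ht ↦ ?_⟩
  · exact (hderiv t ht).congr_of_eventuallyEq (hlk.eventuallyEq_of_mem (hI.mem_nhds ht))
  · rw [hlk ht]
    exact heq t ht

theorem solvesElasticaOn_neg_const_mul {lam : 𝕜} {y y₁ y₂ : 𝕜 → 𝕜}
    (hy : ∀ t ∈ I, HasDerivAt y (y₁ t) t) (hy₁ : ∀ t ∈ I, HasDerivAt y₁ (y₂ t) t)
    (hy₂ : ∀ t ∈ I, 2 * y₂ t = δ * y t - lam ^ 2 * y t ^ 3) :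
    SolvesElasticaOn δ I (fun t ↦ -(lam * y t)) (fun t ↦ -(lam * y₁ t))
      (fun t ↦ -(lam * y₂ t)) := by
  refine ⟨fun t ht ↦ ((hy t ht).const_mul lam).fun_neg,
    fun t ht ↦ ((hy₁ t ht).const_mul lam).fun_neg, fun t ht ↦ ?_⟩
  linear_combination -lam * hy₂ t ht

end Elastica

section RCLike

variable {𝕜 : Type*} [RCLike 𝕜] {lam : 𝕜} {I : Set 𝕜}

theorem exists_eq_half_mul_sq_add_const {u y y₁ : 𝕜 → 𝕜} (hI : IsOpen I)
    (hconn : IsPreconnected I) (hy : ∀ t ∈ I, HasDerivAt y (y₁ t) t)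
    (hu : ∀ t ∈ I, HasDerivAt u (lam * y t * y₁ t) t) :
    ∃ μ : 𝕜, ∀ t ∈ I, u t = lam / 2 * y t ^ 2 + μ := by
  have hsq : ∀ t ∈ I, HasDerivAt (fun s ↦ lam / 2 * y s ^ 2) (lam * y t * y₁ t) t := by
    intro t ht
    refine (((hy t ht).fun_pow 2).const_mul (lam / 2)).congr_deriv ?_
    push_cast
    ring
  exact hI.exists_eq_add_of_deriv_eq hconn
    (fun t ht ↦ (hu t ht).differentiableAt.differentiableWithinAt)
    (fun t ht ↦ (hsq t ht).differentiableAt.differentiableWithinAt)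
    (fun t ht ↦ (hu t ht).deriv.trans (hsq t ht).deriv.symm)

/-- `(x, y)` is a unit-speed solution on `I` of the system `x'' = λyy'`, `y'' = -λyx'`, with first
derivatives `x₁`, `y₁` and second derivatives `x₂`, `y₂`. Over `ℂ`, unit speed refers to the
bilinear form `x₁² + y₁²`, not to the Hermitian norm. -/
structure IsUnitSpeedSolutionOn (lam : 𝕜) (I : Set 𝕜) (x y x₁ y₁ x₂ y₂ : 𝕜 → 𝕜) : Prop where
  hasDerivAt_x : ∀ t ∈ I, HasDerivAt x (x₁ t) t
  hasDerivAt_y : ∀ t ∈ I, HasDerivAt y (y₁ t) t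
  hasDerivAt_x₁ : ∀ t ∈ I, HasDerivAt x₁ (x₂ t) t
  hasDerivAt_y₁ : ∀ t ∈ I, HasDerivAt y₁ (y₂ t) t
  unit_speed : ∀ t ∈ I, x₁ t ^ 2 + y₁ t ^ 2 = 1
  x₂_eq : ∀ t ∈ I, x₂ t = lam * y t * y₁ t
  y₂_eq : ∀ t ∈ I, y₂ t = -(lam * y t * x₁ t)

theorem dynamical_system_to_elastica_general {x y x₁ y₁ x₂ y₂ : 𝕜 → 𝕜} (hI : IsOpen I)
    (hconn : IsPreconnected I) (h : IsUnitSpeedSolutionOn lam I x y x₁ y₁ x₂ y₂) :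
    (∀ t ∈ I, signedCurvature (x₁ t) (y₁ t) (x₂ t) (y₂ t) = -(lam * y t)) ∧
    ∃ μ : 𝕜,
      (∀ t ∈ I, x₁ t = lam / 2 * y t ^ 2 + μ) ∧
      SolvesElasticaOn (-(2 * lam * μ)) I
        (fun t ↦ signedCurvature (x₁ t) (y₁ t) (x₂ t) (y₂ t))
        (fun t ↦ -(lam * y₁ t)) (fun t ↦ -(lam * y₂ t)) := by
  have hcurv : ∀ t ∈ I, signedCurvature (x₁ t) (y₁ t) (x₂ t) (y₂ t) = -(lam * y t) :=
    fun t ht ↦ signedCurvature_eq_neg_of_unit_speed (h.unit_speed t ht) (h.x₂_eq t ht)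
      (h.y₂_eq t ht)
  obtain ⟨μ, hμ⟩ := exists_eq_half_mul_sq_add_const hI hconn h.hasDerivAt_y
    (fun t ht ↦ h.x₂_eq t ht ▸ h.hasDerivAt_x₁ t ht)
  have hy₂ : ∀ t ∈ I, 2 * y₂ t = -(2 * lam * μ) * y t - lam ^ 2 * y t ^ 3 := by
    intro t ht
    rw [h.y₂_eq t ht, hμ t ht]
    ring
  exact ⟨hcurv, μ, hμ,
    (solvesElasticaOn_neg_const_mul h.hasDerivAt_y h.hasDerivAt_y₁ hy₂).congr hI hcurv⟩

end RCLike

/-- Let `λ > 0` and let `γ = (x, y)` be a smooth unit-speed curve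
on an (open, connected) interval `I` whose components satisfy `x'' = λyy'` and
`y'' = -λyx'`. Then the signed curvature `k = x'y'' - x''y'` equals `-λy` on `I`,
there is `μ ∈ ℝ` with `x' = (λ/2)y² + μ` on `I`, and `k` satisfies the elastica
equation `2k'' + k³ - δk = 0` on `I` with `δ = -2λμ`. -/
theorem dynamical_system_to_elastica (lam : ℝ) (hlam : 0 < lam)
    (I : Set ℝ) (hI : IsOpen I) (hconn : IsPreconnected I)
    (x y x1 y1 x2 y2 : ℝ → ℝ)
    (hx : ∀ t ∈ I, HasDerivAt x (x1 t) t)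
    (hy : ∀ t ∈ I, HasDerivAt y (y1 t) t)
    (hx1 : ∀ t ∈ I, HasDerivAt x1 (x2 t) t)
    (hy1 : ∀ t ∈ I, HasDerivAt y1 (y2 t) t)
    (hunit : ∀ t ∈ I, x1 t ^ 2 + y1 t ^ 2 = 1)
    (hsys1 : ∀ t ∈ I, x2 t = lam * y t * y1 t)
    (hsys2 : ∀ t ∈ I, y2 t = -(lam * y t * x1 t)) :
    (∀ t ∈ I, x1 t * y2 t - x2 t * y1 t = -(lam * y t)) ∧
    ∃ μ : ℝ,
      (∀ t ∈ I, x1 t = lam / 2 * y t ^ 2 + μ) ∧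
      (∀ t ∈ I,
        HasDerivAt (fun s => x1 s * y2 s - x2 s * y1 s) (-(lam * y1 t)) t) ∧
      (∀ t ∈ I, HasDerivAt (fun s => -(lam * y1 s)) (-(lam * y2 t)) t) ∧
      (∀ t ∈ I,
        2 * (-(lam * y2 t)) + (x1 t * y2 t - x2 t * y1 t) ^ 3 -
          (-(2 * lam * μ)) * (x1 t * y2 t - x2 t * y1 t) = 0) := by
  exact dynamical_system_to_elastica_general hI hconn ⟨hx, hy, hx1, hy1, hunit, hsys1, hsys2⟩
end
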